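/- (Schur complement with redundant points, eq. Q21_3.) If K_11 is invertible, then K_22 − K_21·K_11⁻¹·K_12 = fromBlocks z 0 0 0, i.e., the Schur complement is the block matrix on y2⊕r whose (y2,y2) block is z and whose other three blocks vanish. -/

import Mathlib

open Matrix

/-!
The redundant block column of `K₁₂` is also a block column of `K₁₁`, so `K₁₁⁻¹` sends it to the
matching block column `[0; 1]` of the identity; dually, the redundant block row of `K₂₁` is a block
row of `K₁₁`. Hence `K₂₁ K₁₁⁻¹ K₁₂` has the same redundant blocks as `K₂₂`, and these cancel.
-/

theorem fromBlocks_sub {l m n o R : Type*} [Sub R]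
    (A A' : Matrix n l R) (B B' : Matrix n m R) (C C' : Matrix o l R) (D D' : Matrix o m R) :
    fromBlocks A B C D - fromBlocks A' B' C' D' =
      fromBlocks (A - A') (B - B') (C - C') (D - D') := by
  ext (i | i) (j | j) <;> rfl

section BlockInverse

variable {m n p q R : Type*} [Fintype m] [Fintype n] [DecidableEq m] [DecidableEq n] [CommRing R]
  {A : Matrix m m R} {B : Matrix m n R} {C : Matrix n m R} {D : Matrix n n R}

theorem inv_fromBlocks_mul_fromRows_right (hK : IsUnit (fromBlocks A B C D)) :
    (fromBlocks A B C D)⁻¹ * fromRows B D = fromRows 0 1 := by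
  have hcol : fromRows B D =
      fromBlocks A B C D * fromRows (0 : Matrix m n R) (1 : Matrix n n R) := by
    simp [fromBlocks_mul_fromRows]
  rw [hcol, nonsing_inv_mul_cancel_left _ _ ((isUnit_iff_isUnit_det _).mp hK)]

theorem fromCols_bottom_mul_inv_fromBlocks (hK : IsUnit (fromBlocks A B C D)) :
    fromCols C D * (fromBlocks A B C D)⁻¹ = fromCols 0 1 := by
  have hrow : fromCols C D =
      fromCols (0 : Matrix n m R) (1 : Matrix n n R) * fromBlocks A B C D := by
    simp [fromCols_mul_fromBlocks]
  rw [hrow, mul_nonsing_inv_cancel_right _ _ ((isUnit_iff_isUnit_det _).mp hK)]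

theorem fromCols_mul_inv_fromBlocks_mul_fromRows_right (hK : IsUnit (fromBlocks A B C D))
    (G : Matrix q m R) (H : Matrix q n R) :
    fromCols G H * (fromBlocks A B C D)⁻¹ * fromRows B D = H := by
  rw [Matrix.mul_assoc, inv_fromBlocks_mul_fromRows_right hK, fromCols_mul_fromRows,
    Matrix.mul_zero, Matrix.mul_one, zero_add]

theorem fromCols_bottom_mul_inv_fromBlocks_mul_fromRows (hK : IsUnit (fromBlocks A B C D))
    (E : Matrix m p R) (F : Matrix n p R) :
    fromCols C D * (fromBlocks A B C D)⁻¹ * fromRows E F = F := by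
  rw [fromCols_bottom_mul_inv_fromBlocks hK, fromCols_mul_fromRows,
    Matrix.zero_mul, Matrix.one_mul, zero_add]

theorem fromBlocks_mul_inv_fromBlocks_mul_fromBlocks (hK : IsUnit (fromBlocks A B C D))
    (E : Matrix m p R) (F : Matrix n p R) (G : Matrix q m R) (H : Matrix q n R) :
    fromBlocks G H C D * (fromBlocks A B C D)⁻¹ * fromBlocks E B F D =
      fromBlocks (fromCols G H * (fromBlocks A B C D)⁻¹ * fromRows E F) H F D := by
  rw [← fromRows_fromCols_eq_fromBlocks G H C D, ← fromCols_fromRows_eq_fromBlocks E B F D,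
    fromRows_mul, fromRows_mul_fromCols,
    fromCols_mul_inv_fromBlocks_mul_fromRows_right hK,
    fromCols_bottom_mul_inv_fromBlocks_mul_fromRows hK,
    fromCols_bottom_mul_inv_fromBlocks_mul_fromRows hK]

theorem schur_complement_redundant_points_general (hK : IsUnit (fromBlocks A B C D))
    (E : Matrix m p R) (F : Matrix n p R) (G : Matrix q m R) (H : Matrix q n R)
    (Z : Matrix q p R) :
    fromBlocks Z H F D
        - fromBlocks G H C D * (fromBlocks A B C D)⁻¹ * fromBlocks E B F D =
      fromBlocks (Z - fromCols G H * (fromBlocks A B C D)⁻¹ * fromRows E F) 0 0 0 := by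
  rw [fromBlocks_mul_inv_fromBlocks_mul_fromBlocks hK, fromBlocks_sub,
    sub_self, sub_self, sub_self]

end BlockInverse

/-- Schur complement with redundant points (eq. Q21_3): if `K_11` is invertible, then
`K_22 − K_21·K_11⁻¹·K_12 = fromBlocks z 0 0 0`, with `z := J_22 − L_12ᵀ·K_11⁻¹·L_12`. -/
theorem schur_complement_redundant_points
    {y1 y2 r : Type*} [Fintype y1] [Fintype y2] [Fintype r]
    [DecidableEq y1] [DecidableEq y2] [DecidableEq r]
    [Nonempty y1] [Nonempty y2] [Nonempty r]
    (J11 : Matrix y1 y1 ℝ) (J1r : Matrix y1 r ℝ) (Jrr : Matrix r r ℝ)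
    (J12 : Matrix y1 y2 ℝ) (Jr2 : Matrix r y2 ℝ) (J22 : Matrix y2 y2 ℝ)
    (hJrr : Jrrᵀ = Jrr)
    (hK11 : IsUnit (fromBlocks J11 J1r J1rᵀ Jrr)) :
    fromBlocks J22 Jr2ᵀ Jr2 Jrr
      - (fromBlocks J12 J1r Jr2 Jrr)ᵀ * (fromBlocks J11 J1r J1rᵀ Jrr)⁻¹
        * fromBlocks J12 J1r Jr2 Jrr
      = fromBlocks
          (J22 - (fromRows J12 Jr2)ᵀ * (fromBlocks J11 J1r J1rᵀ Jrr)⁻¹ * fromRows J12 Jr2)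
          0 0 0 := by
  simpa only [fromBlocks_transpose, transpose_fromRows, hJrr] using
    schur_complement_redundant_points_general hK11 J12 Jr2 J12ᵀ Jr2ᵀ J22
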